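/- With the notation and hypotheses of the context (including the Grothendieck–Riemann–Roch relation, the twist relation, the grading assumptions, the pair data [D_p] ∈ A^2 with D_{i_1}·D_{i_2} = Σ_{p ∈ P(i_1,i_2)} [D_p] and h^{(2)}_{(i_1,i_2),λ} = Σ_p r_{(i_1,i_2),λ,p}·[D_p], and the rank compatibilities), the degree-2 component of chPar equals c_2 − Σ_{i=1}^{n} Σ_{λ ∈ Σ'_i} α_i(λ)·γ_{i,λ} + (1/2) Σ_{i=1}^{n} Σ_{λ ∈ Σ'_i} α_i(λ)^2 · r_{i,λ} · D_i^2 + Σ_{i_1 < i_2} Σ_{λ_1 ∈ Σ'_{i_1}, λ_2 ∈ Σ'_{i_2}} Σ_{p ∈ P(i_1,i_2)} α_{i_1}(λ_1)·α_{i_2}(λ_2)·r_{(i_1,i_2),(λ_1,λ_2),p}·[D_p]. (This is the formula ch_2^{Par}(E) = ch_2^{Vb}(E) − Σ α·ξ_*(c_1(Gr)) + ½ Σ α²·rank(Gr)·[D_i]² + Σ_{i_1<i_2} Σ α_1 α_2 · rank_p(Gr)·[D_p], agreeing with Mochizuki's and Panov's formulas.) -/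

import Mathlib

open scoped Classical

noncomputable section

variable {A : Type*} [CommRing A] [Algebra ℝ A]

/-- `exp x = Σ_{k ≥ 0} x^k/k!` for a nilpotent element `x`, as a finite sum (the terms with
`k ≥ nilpotencyClass x` vanish). -/
def nexp (x : A) : A :=
  ∑ m ∈ Finset.range (nilpotencyClass x), ((m.factorial : ℝ))⁻¹ • x ^ m

/-- `J(a,b,x) = Σ_{k ≥ 0} (-1)^k ((b^{k+1} - a^{k+1})/(k+1)!) x^k`, the formal value of
`∫_a^b exp (-ρ x) dρ` for a nilpotent element `x` (a finite sum). -/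
def Jf (a b : ℝ) (x : A) : A :=
  ∑ m ∈ Finset.range (nilpotencyClass x),
    ((-1 : ℝ) ^ m * ((b ^ (m + 1) - a ^ (m + 1)) / (m + 1).factorial)) • x ^ m

variable {n : ℕ} {Sig : Fin n → Type*} [∀ i, Fintype (Sig i)] [∀ i, LinearOrder (Sig i)]

/-- `c_σ = c + Σ_{q=1}^n (-1)^q Σ_{I = {i_1<⋯<i_q}} Σ_{λ : σ_{i_j} < λ_{i_j} ∀ j} g_{I,λ}`,
the Chern character of the component sheaf `E_σ` of a locally abelian parabolic bundle,
computed via the Koszul-style resolution.  Here `λ` runs over multi-indices of covers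
(risers) `λ_i` of `Σ_i` for `i ∈ I` with `σ_i ≤ m_-(λ_i)`. -/
def cSigma (c : A) (g : ∀ I : Finset (Fin n), ((i : I) → Sig i.1 × Sig i.1) → A)
    (σ : ∀ i, Sig i) : A :=
  c + ∑ I ∈ Finset.univ.filter (fun I : Finset (Fin n) => I.Nonempty),
        (-1 : A) ^ I.card *
          ∑ lam ∈ Finset.univ.filter
              (fun lam : (i : I) → Sig i.1 × Sig i.1 =>
                ∀ i : I, (lam i).1 ⋖ (lam i).2 ∧ σ i.1 ≤ (lam i).1),
            g I lam

/-- The parabolic Chern character, given by the Iyer–Simpson integral formula evaluated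
formally: `chPar = (∏_i J(0,1,D_i))⁻¹ Σ_{σ} c_σ ∏_i J(α_-(σ_i), α_+(σ_i), D_i)`. -/
def chPar (D : Fin n → A) (αm αp : ∀ i, Sig i → ℝ) (c : A)
    (g : ∀ I : Finset (Fin n), ((i : I) → Sig i.1 × Sig i.1) → A) : A :=
  Ring.inverse (∏ i, Jf 0 1 (D i)) *
    ∑ σ : ∀ i, Sig i, cSigma c g σ * ∏ i, Jf (αm i (σ i)) (αp i (σ i)) (D i)

/-- The multi-index of covers on the singleton `{i}` determined by one cover `p` of `Σ_i`. -/
def lamOfSingle {n : ℕ} {Sig : Fin n → Type*} (i : Fin n) (p : Sig i × Sig i) :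
    (j : ({i} : Finset (Fin n))) → Sig j.1 × Sig j.1 :=
  fun j => (Finset.mem_singleton.mp j.2).symm ▸ p

/-- The multi-index of covers on the pair `{i₁, i₂}` determined by covers `p₁` of `Σ_{i₁}`
and `p₂` of `Σ_{i₂}`. -/
def lamOfPair {n : ℕ} {Sig : Fin n → Type*} (i₁ i₂ : Fin n)
    (p₁ : Sig i₁ × Sig i₁) (p₂ : Sig i₂ × Sig i₂) :
    (j : ({i₁, i₂} : Finset (Fin n))) → Sig j.1 × Sig j.1 :=
  fun j =>
    if h : j.1 = i₁ then h.symm ▸ p₁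
    else
      (by
        have hj := j.2
        simp only [Finset.mem_insert, Finset.mem_singleton] at hj
        exact ((hj.resolve_left h).symm ▸ p₂ : Sig j.1 × Sig j.1))

/-- The multi-index of covers on the triple `{i₁, i₂, i₃}` determined by covers `p₁, p₂, p₃`
of `Σ_{i₁}, Σ_{i₂}, Σ_{i₃}`. -/
def lamOfTriple {n : ℕ} {Sig : Fin n → Type*} (i₁ i₂ i₃ : Fin n)
    (p₁ : Sig i₁ × Sig i₁) (p₂ : Sig i₂ × Sig i₂) (p₃ : Sig i₃ × Sig i₃) :
    (j : ({i₁, i₂, i₃} : Finset (Fin n))) → Sig j.1 × Sig j.1 :=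
  fun j =>
    if h1 : j.1 = i₁ then h1.symm ▸ p₁
    else if h2 : j.1 = i₂ then h2.symm ▸ p₂
    else
      (by
        have hj := j.2
        simp only [Finset.mem_insert, Finset.mem_singleton] at hj
        exact (((hj.resolve_left h1).resolve_left h2).symm ▸ p₃ : Sig j.1 × Sig j.1))

/-!
The integrals satisfy `J(a - 1, b - 1, x) = exp x * J(a, b, x)`, and the consecutive weights of
`Σ_i` telescope, so summing `J(α_-(s), α_+(s), D_i)` over `s ≤ m` gives
`exp D_i * J(0, 1 + α_+(m), D_i)`. Interchanging the sum over `σ` with the sums over `I` and `λ`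
in `c_σ` therefore yields
`chPar = exp D * (c + Σ_I (-1)^|I| Σ_λ h_{I,λ} ∏_{i ∈ I} J(0, 1 + α_i(λ_i), D_i))`.
The twist relation writes `c` in the same shape with all `α_i` replaced by `0`. In the difference
`chPar - c` only `|I| ≤ 2` reaches degree two. There `|I| = 2` contributes the coefficient
`(1 + α_i)(1 + α_j) - 1`, whose linear part, by the rank compatibilities, cancels the cross terms
`D_i (D - D_i)` coming from `|I| = 1`.
-/

open Finset PowerSeries

section NilpotentEval

variable {R A : Type*} [CommRing R] [CommRing A] [Algebra R A]

lemma aeval_eq_aeval_of_coeff_eq {x : A} {N : ℕ} (hx : x ^ N = 0) {p q : Polynomial R}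
    (h : ∀ m < N, p.coeff m = q.coeff m) : Polynomial.aeval x p = Polynomial.aeval x q := by
  obtain ⟨s, hs⟩ : Polynomial.X ^ N ∣ p - q :=
    Polynomial.X_pow_dvd_iff.2 fun m hm => by rw [Polynomial.coeff_sub, h m hm, sub_self]
  rw [← sub_eq_zero, ← map_sub, hs, map_mul, map_pow, Polynomial.aeval_X, hx, zero_mul]

lemma aeval_trunc_eq_sum (x : A) (N : ℕ) (f : R⟦X⟧) :
    Polynomial.aeval x (trunc N f) = ∑ m ∈ range N, coeff m f • x ^ m := by
  simp only [Polynomial.aeval_def, eval₂_trunc_eq_sum_range, Algebra.smul_def]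

/-- Evaluation of formal power series at a nilpotent element `x`, as an algebra homomorphism.
It is given by evaluating the truncation at the nilpotency class of `x`. -/
def nilpotentEval {x : A} (hx : IsNilpotent x) : R⟦X⟧ →ₐ[R] A :=
  AlgHom.ofLinearMap
    { toFun f := Polynomial.aeval x (trunc (nilpotencyClass x) f)
      map_add' f g := by rw [map_add, map_add]
      map_smul' a f := by rw [map_smul, map_smul, RingHom.id_apply] }
    (by
      refine (aeval_eq_aeval_of_coeff_eq (pow_nilpotencyClass hx) (q := 1) fun m hm => ?_).trans
        (map_one _)
      rw [coeff_trunc, if_pos hm, coeff_one, Polynomial.coeff_one])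
    (fun f g => by
      refine (aeval_eq_aeval_of_coeff_eq (pow_nilpotencyClass hx) fun m hm => ?_).trans
        (map_mul _ _ _)
      rw [coeff_trunc, if_pos hm, coeff_mul_eq_coeff_trunc_mul_trunc f g hm, ← Polynomial.coe_mul,
        Polynomial.coeff_coe])

lemma nilpotentEval_eq_sum {x : A} (hx : IsNilpotent x) (f : R⟦X⟧) :
    nilpotentEval hx f = ∑ m ∈ range (nilpotencyClass x), coeff m f • x ^ m :=
  aeval_trunc_eq_sum x _ f

end NilpotentEval

section ExpIntegral

/-- The power series `∫_a^b exp (-ρ X) dρ`, whose value at a nilpotent `x` is `Jf a b x`. -/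
def expIntegralSeries (a b : ℝ) : ℝ⟦X⟧ :=
  .mk fun m => (-1 : ℝ) ^ m * ((b ^ (m + 1) - a ^ (m + 1)) / (m + 1).factorial)

lemma X_mul_expIntegralSeries (a b : ℝ) :
    X * expIntegralSeries a b = rescale (-a) (exp ℝ) - rescale (-b) (exp ℝ) := by
  ext (_ | m)
  · rw [coeff_zero_X_mul, map_sub, coeff_rescale, coeff_rescale, pow_zero, pow_zero, sub_self]
  · simp only [coeff_succ_X_mul, expIntegralSeries, coeff_mk, map_sub, coeff_rescale, coeff_exp,
      eq_ratCast, Rat.cast_div, Rat.cast_one, Rat.cast_natCast]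
    rw [neg_pow a, neg_pow b]
    ring

lemma expIntegralSeries_add_add (a b s : ℝ) :
    expIntegralSeries (a + s) (b + s) = rescale (-s) (exp ℝ) * expIntegralSeries a b := by
  refine mul_left_cancel₀ (X_ne_zero (R := ℝ)) ?_
  rw [mul_left_comm, X_mul_expIntegralSeries, X_mul_expIntegralSeries, mul_sub,
    exp_mul_exp_eq_exp_add, exp_mul_exp_eq_exp_add, neg_add_rev, neg_add_rev]

lemma isUnit_expIntegralSeries {a b : ℝ} (hab : a ≠ b) : IsUnit (expIntegralSeries a b) := by
  rw [isUnit_iff_constantCoeff, ← coeff_zero_eq_constantCoeff_apply]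
  simpa [expIntegralSeries, sub_eq_zero] using hab.symm

lemma nexp_eq_nilpotentEval {x : A} (hx : IsNilpotent x) :
    nexp x = nilpotentEval hx (exp ℝ) := by
  simp [nexp, nilpotentEval_eq_sum, coeff_exp]

lemma Jf_eq_nilpotentEval (a b : ℝ) {x : A} (hx : IsNilpotent x) :
    Jf a b x = nilpotentEval hx (expIntegralSeries a b) := by
  simp only [Jf, nilpotentEval_eq_sum, expIntegralSeries, coeff_mk]

lemma Jf_eq_sub (a b : ℝ) (x : A) : Jf a b x = Jf 0 b x - Jf 0 a x := by
  simp only [Jf, ← sum_sub_distrib, ← sub_smul]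
  refine sum_congr rfl fun m _ => ?_
  congr 1
  ring

lemma Jf_neg_one_eq_nexp_mul (b : ℝ) {x : A} (hx : IsNilpotent x) :
    Jf (-1) b x = nexp x * Jf 0 (1 + b) x := by
  have h := expIntegralSeries_add_add 0 (1 + b) (-1)
  rw [zero_add, add_neg_cancel_comm, neg_neg, rescale_one, RingHom.id_apply] at h
  rw [Jf_eq_nilpotentEval _ _ hx, Jf_eq_nilpotentEval _ _ hx, nexp_eq_nilpotentEval hx, h, map_mul]

lemma isUnit_Jf {a b : ℝ} (hab : a ≠ b) {x : A} (hx : IsNilpotent x) : IsUnit (Jf a b x) := by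
  rw [Jf_eq_nilpotentEval _ _ hx]
  exact (isUnit_expIntegralSeries hab).map _

lemma nexp_eq_exp [Module ℚ A] (x : A) : nexp x = IsNilpotent.exp x :=
  sum_congr rfl fun m _ => map_inv_natCast_smul (AddMonoidHom.id A) ℝ ℚ m.factorial (x ^ m)

lemma nexp_sum {ι : Type*} (s : Finset ι) {D : ι → A} (hD : ∀ i ∈ s, IsNilpotent (D i)) :
    nexp (∑ i ∈ s, D i) = ∏ i ∈ s, nexp (D i) := by
  let _ : Module ℚ A := Module.compHom A (algebraMap ℚ ℝ)
  simp only [nexp_eq_exp]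
  induction s using Finset.cons_induction with
  | empty => simp only [sum_empty, prod_empty, IsNilpotent.exp_zero]
  | cons a s ha ih =>
    have hs : ∀ i ∈ s, IsNilpotent (D i) := fun i hi => hD i (mem_cons_of_mem hi)
    rw [sum_cons, prod_cons, IsNilpotent.exp_add_of_commute (Commute.all _ _)
      (hD a (mem_cons_self a s)) (isNilpotent_sum hs), ih hs]

end ExpIntegral

section Graded

open GradedAlgebra

variable {R A : Type*} [CommRing R] [CommRing A] [Algebra R A]
  (𝒜 : ℕ → Submodule R A) [GradedAlgebra 𝒜]

lemma proj_mul (k : ℕ) (a b : A) :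
    proj 𝒜 k (a * b) = ∑ ij ∈ antidiagonal k, proj 𝒜 ij.1 a * proj 𝒜 ij.2 b := by
  simp only [proj_apply, DirectSum.decompose_mul, DirectSum.coe_mul_apply_eq_sum_antidiagonal]

lemma proj_mul_eq_zero_of_lt {p k : ℕ} {a : A} (ha : ∀ m < p, proj 𝒜 m a = 0) (hk : k < p)
    (b : A) : proj 𝒜 k (a * b) = 0 := by
  rw [proj_mul]
  refine sum_eq_zero fun ij hij => ?_
  rw [ha ij.1 ((le_self_add.trans_eq (mem_antidiagonal.1 hij)).trans_lt hk), zero_mul]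

lemma proj_zero_mul (a b : A) : proj 𝒜 0 (a * b) = proj 𝒜 0 a * proj 𝒜 0 b :=
  map_mul (GradedRing.projZeroRingHom 𝒜) a b

lemma proj_one_mul (a b : A) :
    proj 𝒜 1 (a * b) = proj 𝒜 0 a * proj 𝒜 1 b + proj 𝒜 1 a * proj 𝒜 0 b := by
  simp only [proj_mul, Nat.antidiagonal_succ, Nat.antidiagonal_zero, map_singleton, sum_cons,
    sum_singleton]
  rfl

lemma proj_two_mul (a b : A) :
    proj 𝒜 2 (a * b) =
      proj 𝒜 0 a * proj 𝒜 2 b + proj 𝒜 1 a * proj 𝒜 1 b + proj 𝒜 2 a * proj 𝒜 0 b := by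
  simp only [proj_mul, Nat.antidiagonal_succ, Nat.antidiagonal_zero, map_singleton, map_cons,
    sum_cons, sum_singleton, add_assoc]
  rfl

lemma proj_nilpotentEval (k : ℕ) {x : A} (hx : IsNilpotent x) (hx1 : x ∈ 𝒜 1) (f : R⟦X⟧) :
    proj 𝒜 k (nilpotentEval hx f) = coeff k f • x ^ k := by
  have hpow : ∀ m, x ^ m ∈ 𝒜 m := fun m => by simpa using SetLike.pow_mem_graded m hx1
  have hterm : ∀ m, proj 𝒜 k (x ^ m) = if m = k then x ^ k else 0 := by
    intro m
    split_ifs with h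
    · rw [← h, proj_apply, DirectSum.decompose_of_mem_same 𝒜 (hpow m)]
    · rw [proj_apply, DirectSum.decompose_of_mem_ne 𝒜 (hpow m) h]
  simp only [nilpotentEval_eq_sum, map_sum, map_smul, hterm, smul_ite, smul_zero, sum_ite_eq']
  split_ifs with hk
  · rfl
  · rw [pow_eq_zero_of_le (by simpa using hk) (pow_nilpotencyClass hx), smul_zero]

end Graded

section GradedExpIntegral

open GradedAlgebra

variable (𝒜 : ℕ → Submodule ℝ A) [GradedAlgebra 𝒜]

lemma proj_nexp (k : ℕ) {x : A} (hx : IsNilpotent x) (hx1 : x ∈ 𝒜 1) :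
    proj 𝒜 k (nexp x) = (k.factorial : ℝ)⁻¹ • x ^ k := by
  rw [nexp_eq_nilpotentEval hx, proj_nilpotentEval 𝒜 k hx hx1]
  simp [coeff_exp]

lemma proj_Jf (k : ℕ) (a b : ℝ) {x : A} (hx : IsNilpotent x) (hx1 : x ∈ 𝒜 1) :
    proj 𝒜 k (Jf a b x) =
      ((-1 : ℝ) ^ k * ((b ^ (k + 1) - a ^ (k + 1)) / (k + 1).factorial)) • x ^ k := by
  rw [Jf_eq_nilpotentEval a b hx, proj_nilpotentEval 𝒜 k hx hx1, expIntegralSeries, coeff_mk]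

lemma proj_zero_Jf_zero (b : ℝ) {x : A} (hx : IsNilpotent x) (hx1 : x ∈ 𝒜 1) :
    proj 𝒜 0 (Jf 0 b x) = algebraMap ℝ A b := by
  rw [proj_Jf 𝒜 0 0 b hx hx1, Algebra.smul_def]
  simp

/-- The coefficients come from `Jf 1 (1 + a) x = a - (a + a ^ 2 / 2) x + ⋯`. -/
lemma proj_two_mul_nexp_mul_Jf_sub {h x y : A} (hx : IsNilpotent x) (hx1 : x ∈ 𝒜 1)
    (hy : IsNilpotent y) (hy1 : y ∈ 𝒜 1) {ρ : ℝ} (h0 : proj 𝒜 0 h = 0)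
    (h1 : proj 𝒜 1 h = ρ • x) (a : ℝ) :
    proj 𝒜 2 (h * (nexp y * (Jf 0 (1 + a) x - Jf 0 1 x))) =
      a • proj 𝒜 2 h - (1 / 2 * a ^ 2 * ρ) • x ^ 2 + (a * ρ) • (x * (y - x)) := by
  rw [← Jf_eq_sub, proj_two_mul, proj_zero_mul, proj_one_mul, h0, h1]
  simp only [proj_nexp 𝒜 _ hy hy1, proj_Jf 𝒜 _ _ _ hx hx1]
  norm_num [Nat.factorial]
  algebra

lemma proj_two_mul_nexp_mul_Jf_mul_Jf_sub {h x x' y : A} (hx : IsNilpotent x) (hx1 : x ∈ 𝒜 1)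
    (hx' : IsNilpotent x') (hx1' : x' ∈ 𝒜 1) (hy : IsNilpotent y) (hy1 : y ∈ 𝒜 1)
    (h0 : proj 𝒜 0 h = 0) (h1 : proj 𝒜 1 h = 0) (a b : ℝ) :
    proj 𝒜 2 (h * (nexp y * (Jf 0 (1 + a) x * Jf 0 (1 + b) x' - Jf 0 1 x * Jf 0 1 x'))) =
      (a * b + a + b) • proj 𝒜 2 h := by
  rw [proj_two_mul, proj_zero_mul, map_sub, proj_zero_mul, proj_zero_mul, h0, h1,
    proj_nexp 𝒜 0 hy hy1]
  simp only [proj_zero_Jf_zero 𝒜 _ hx hx1, proj_zero_Jf_zero 𝒜 _ hx' hx1']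
  algebra

end GradedExpIntegral

section FiniteSums

lemma sum_filter_le_sub_of_covBy {S G : Type*} [Fintype S] [LinearOrder S] [AddCommGroup G]
    {u v : S → G} (huv : ∀ s t, s ⋖ t → v s = u t) {η : S} (hη : IsBot η) (m : S) :
    ∑ s with s ≤ m, (v s - u s) = v m - u η := by
  induction m using WellFoundedLT.induction with
  | ind m ih =>
    rcases (hη m).eq_or_lt with rfl | hlt
    · have hbot : univ.filter (· ≤ η) = {η} := by
        ext s
        rw [mem_filter_univ, mem_singleton, (hη s).ge_iff_eq']
      rw [hbot, sum_singleton]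
    · obtain ⟨p, -, hpm⟩ := exists_le_covBy_of_lt hlt
      have hinsert : univ.filter (· ≤ m) = insert m (univ.filter (· ≤ p)) := by
        ext s
        simp only [mem_filter_univ, mem_insert, le_iff_eq_or_lt (a := s) (b := m),
          hpm.lt_iff_le_left]
      rw [hinsert, sum_insert (by simp [hpm.lt]), ih p hpm.lt, huv p m hpm, sub_add_sub_cancel]

lemma sum_filter_forall_prod {ι A : Type*} {S : ι → Type*} [Fintype ι] [DecidableEq ι]
    [∀ i, Fintype (S i)] [CommSemiring A] (f : ∀ i, S i → A) (I : Finset ι)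
    (p : ∀ i : I, S i → Prop) [∀ i, DecidablePred (p i)] :
    ∑ σ : ∀ i, S i with ∀ i : I, p i (σ i), ∏ i, f i (σ i) =
      (∏ i : I, ∑ s with p i s, f i s) * ∏ i ∈ Iᶜ, ∑ s, f i s := by
  let t (i : ι) : Finset (S i) := if h : i ∈ I then univ.filter (p ⟨i, h⟩) else univ
  have ht : univ.filter (fun σ : ∀ i, S i => ∀ i : I, p i (σ i)) = Fintype.piFinset t := by
    ext σ
    simp only [mem_filter_univ, Fintype.mem_piFinset, Subtype.forall, t]
    refine forall_congr' fun i => ?_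
    by_cases hi : i ∈ I <;> simp [hi]
  rw [ht, ← prod_univ_sum, ← prod_mul_prod_compl I, ← prod_coe_sort I]
  congr 1
  · exact prod_congr rfl fun i _ => by simp [t]
  · exact prod_congr rfl fun i hi => by simp [t, mem_compl.1 hi]

lemma sum_card_eq_two {ι G : Type*} [Fintype ι] [LinearOrder ι] [AddCommMonoid G]
    (F : Finset ι → G) :
    ∑ I with #I = 2, F I = ∑ i, ∑ j with i < j, F {i, j} := by
  rw [sum_sigma']
  symm
  refine sum_bij (fun q _ => {q.1, q.2}) ?_ ?_ ?_ fun _ _ => rfl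
  · rintro ⟨i, j⟩ hij
    simp only [mem_sigma, mem_filter_univ] at hij ⊢
    exact card_pair hij.2.ne
  · rintro ⟨i, j⟩ hij ⟨k, l⟩ hkl h
    simp only [mem_sigma, mem_filter_univ] at hij hkl
    obtain ⟨rfl, rfl⟩ | ⟨rfl, rfl⟩ :=
      Set.pair_eq_pair_iff.1 (by simpa using congrArg ((↑) : Finset ι → Set ι) h)
    · rfl
    · exact absurd hij.2 hkl.2.asymm
  · intro I hI
    obtain ⟨i, j, hij, rfl⟩ := card_eq_two.1 (by simpa using hI)
    rcases hij.lt_or_gt with h | h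
    · exact ⟨⟨i, j⟩, by simpa using h, rfl⟩
    · exact ⟨⟨j, i⟩, by simpa using h, pair_comm j i⟩

lemma sum_nonempty_eq_of_card_le_two {ι G : Type*} [Fintype ι] [LinearOrder ι] [AddCommMonoid G]
    {F : Finset ι → G} (hF : ∀ I, 2 < #I → F I = 0) :
    ∑ I with I.Nonempty, F I = ∑ i, F {i} + ∑ i, ∑ j with i < j, F {i, j} := by
  have hone : ∑ I with #I = 1, F I = ∑ i, F {i} := by
    rw [univ_filter_card_eq, powersetCard_one, sum_map]
    rfl
  rw [← hone, ← sum_card_eq_two, ← sum_filter_add_sum_filter_not (univ.filter _) (#· = 1)]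
  simp only [filter_filter]
  congr 1
  · refine sum_congr (filter_congr fun I _ => ?_) fun _ _ => rfl
    rw [← card_pos]
    lia
  · refine (sum_subset (fun I hI => ?_) fun I hI hI' => hF I ?_).symm
    all_goals simp only [mem_filter_univ, ← card_pos] at *
    all_goals lia

lemma sum_smul_mul_sum_sub {ι R A : Type*} [Fintype ι] [LinearOrder ι] [CommRing R] [CommRing A]
    [Algebra R A] (w : ι → R) (D : ι → A) :
    ∑ i, w i • (D i * (∑ j, D j - D i)) = ∑ i, ∑ j with i < j, (w i + w j) • (D i * D j) := by
  have hsplit : ∀ i, ∑ j, D j - D i = ∑ j with i < j, D j + ∑ j with j < i, D j := by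
    intro i
    have hne : univ.filter (· ≠ i) = univ.filter (i < ·) ∪ univ.filter (· < i) := by
      ext j
      simp only [mem_union, mem_filter_univ, ne_iff_lt_or_gt, or_comm]
    rw [sub_eq_iff_eq_add, ← sum_union, ← hne, filter_ne', sum_erase_add _ _ (mem_univ i)]
    exact disjoint_filter.2 fun j _ hij => hij.asymm
  have hswap : ∑ i, ∑ j with j < i, w i • (D i * D j) = ∑ i, ∑ j with i < j, w j • (D i * D j) := by
    rw [sum_comm' (t' := univ) (s' := fun j => univ.filter (j < ·)) (by simp)]
    simp only [mul_comm]
  simp only [hsplit, mul_add, smul_add, mul_sum, smul_sum, add_smul, sum_add_distrib, hswap]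

lemma sum_smul_sum_of_marginal {X Y P R A : Type*} [Fintype P] [CommRing R] [AddCommGroup A]
    [Module R A] {s : Finset X} {t : Finset Y} {ρ : X → R} {T : X → Y → P → R}
    (hT : ∀ x ∈ s, ∀ p, ∑ y ∈ t, T x y p = ρ x) (a : X → R) (d : P → A) :
    ∑ x ∈ s, ∑ y ∈ t, a x • ∑ p, T x y p • d p = (∑ x ∈ s, a x * ρ x) • ∑ p, d p := by
  rw [sum_smul]
  refine sum_congr rfl fun x hx => ?_
  rw [← smul_sum, sum_comm, mul_smul, smul_sum (r := ρ x)]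
  simp only [← sum_smul, hT x hx]

lemma sum_smul_sum_of_marginals {X Y P R A : Type*} [Fintype P] [CommRing R] [AddCommGroup A]
    [Module R A] {s : Finset X} {t : Finset Y} {ρ : X → R} {ρ' : Y → R} {T : X → Y → P → R}
    (hT : ∀ x ∈ s, ∀ p, ∑ y ∈ t, T x y p = ρ x) (hT' : ∀ y ∈ t, ∀ p, ∑ x ∈ s, T x y p = ρ' y)
    (a : X → R) (b : Y → R) (d : P → A) :
    ∑ x ∈ s, ∑ y ∈ t, (a x * b y + a x + b y) • ∑ p, T x y p • d p =
      ∑ x ∈ s, ∑ y ∈ t, ∑ p, (a x * b y * T x y p) • d p +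
        (∑ x ∈ s, a x * ρ x + ∑ y ∈ t, b y * ρ' y) • ∑ p, d p := by
  rw [add_smul, ← sum_smul_sum_of_marginal hT, ← sum_smul_sum_of_marginal hT',
    sum_comm (s := t), ← add_assoc]
  simp only [add_smul, sum_add_distrib, mul_smul, smul_sum]

end FiniteSums

section CoverSums

variable {n : ℕ} {Sig : Fin n → Type*}

lemma lamOfPair_left (i j : Fin n) (p : Sig i × Sig i) (q : Sig j × Sig j) :
    lamOfPair i j p q ⟨i, mem_insert_self i {j}⟩ = p := by
  simp [lamOfPair]

lemma lamOfPair_right {i j : Fin n} (hij : i ≠ j) (p : Sig i × Sig i) (q : Sig j × Sig j) :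
    lamOfPair i j p q ⟨j, mem_insert_of_mem (mem_singleton_self j)⟩ = q := by
  simp [lamOfPair, hij.symm]

variable [∀ i, Fintype (Sig i)] [∀ i, LinearOrder (Sig i)]

/-- The set `Σ'` of covers of a finite linear order `Σ`, a cover being encoded as the pair of its
endpoints. -/
def covers (S : Type*) [Fintype S] [LinearOrder S] : Finset (S × S) :=
  univ.filter fun p => p.1 ⋖ p.2

/-- The multi-indices of covers `∏_{i ∈ I} Σ'_i`. -/
def coverIndices (Sig : Fin n → Type*) [∀ i, Fintype (Sig i)]
    [∀ i, LinearOrder (Sig i)] (I : Finset (Fin n)) : Finset ((i : I) → Sig i × Sig i) :=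
  univ.filter fun lam => ∀ i, (lam i).1 ⋖ (lam i).2

lemma mem_covers {S : Type*} [Fintype S] [LinearOrder S] {p : S × S} :
    p ∈ covers S ↔ p.1 ⋖ p.2 :=
  mem_filter_univ p

lemma mem_coverIndices {I : Finset (Fin n)} {lam : (i : I) → Sig i × Sig i} :
    lam ∈ coverIndices Sig I ↔ ∀ i, (lam i).1 ⋖ (lam i).2 :=
  mem_filter_univ lam

/-- The signed sum `Σ_{q ≥ 1} (-1)^q Σ_{#I = q} Σ_λ φ_{I,λ}` over all multi-indices of covers,
the shape of the Koszul-type resolution behind `cSigma`. -/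
def coverAltSum {M : Type*} [AddCommGroup M]
    (φ : ∀ I : Finset (Fin n), ((i : I) → Sig i × Sig i) → M) : M :=
  ∑ I with I.Nonempty, (-1 : ℤ) ^ #I • ∑ lam ∈ coverIndices Sig I, φ I lam

section AddCommGroup

variable {M : Type*} [AddCommGroup M]

lemma coverAltSum_congr {φ ψ : ∀ I : Finset (Fin n), ((i : I) → Sig i × Sig i) → M}
    (h : ∀ I, I.Nonempty → ∀ lam ∈ coverIndices Sig I, φ I lam = ψ I lam) :
    coverAltSum φ = coverAltSum ψ :=
  sum_congr rfl fun I hI => by rw [sum_congr rfl (h I ((mem_filter_univ I).1 hI))]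

lemma map_coverAltSum {N F : Type*} [AddCommGroup N] [FunLike F M N] [AddMonoidHomClass F M N]
    (f : F) (φ : ∀ I : Finset (Fin n), ((i : I) → Sig i × Sig i) → M) :
    f (coverAltSum φ) = coverAltSum fun I lam => f (φ I lam) := by
  simp only [coverAltSum, map_sum, map_zsmul]

lemma mul_coverAltSum {A : Type*} [Ring A] (a : A)
    (φ : ∀ I : Finset (Fin n), ((i : I) → Sig i × Sig i) → A) :
    a * coverAltSum φ = coverAltSum fun I lam => a * φ I lam :=
  map_coverAltSum (AddMonoidHom.mulLeft a) φ

lemma coverAltSum_mul {A : Type*} [Ring A]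
    (φ : ∀ I : Finset (Fin n), ((i : I) → Sig i × Sig i) → A) (a : A) :
    coverAltSum φ * a = coverAltSum fun I lam => φ I lam * a :=
  map_coverAltSum (AddMonoidHom.mulRight a) φ

lemma coverAltSum_sub (φ ψ : ∀ I : Finset (Fin n), ((i : I) → Sig i × Sig i) → M) :
    coverAltSum (fun I lam => φ I lam - ψ I lam) = coverAltSum φ - coverAltSum ψ := by
  simp only [coverAltSum, sum_sub_distrib, smul_sub]

lemma sum_coverAltSum {X : Type*} (s : Finset X)
    (φ : X → ∀ I : Finset (Fin n), ((i : I) → Sig i × Sig i) → M) :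
    ∑ x ∈ s, coverAltSum (φ x) = coverAltSum fun I lam => ∑ x ∈ s, φ x I lam := by
  simp only [coverAltSum]
  rw [sum_comm]
  refine sum_congr rfl fun I _ => ?_
  rw [← smul_sum, sum_comm]

lemma lamOfSingle_mem_coverIndices {i : Fin n} {p : Sig i × Sig i} (hp : p ∈ covers (Sig i)) :
    lamOfSingle i p ∈ coverIndices Sig {i} := by
  rw [mem_coverIndices]
  rintro ⟨j, hj⟩
  obtain rfl := mem_singleton.1 hj
  exact mem_covers.1 hp

lemma lamOfPair_mem_coverIndices {i j : Fin n} (hij : i ≠ j) {p : Sig i × Sig i}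
    {q : Sig j × Sig j} (hp : p ∈ covers (Sig i)) (hq : q ∈ covers (Sig j)) :
    lamOfPair i j p q ∈ coverIndices Sig {i, j} := by
  rw [mem_coverIndices]
  rintro ⟨k, hk⟩
  obtain rfl | hk' := mem_insert.1 hk
  · rw [lamOfPair_left]
    exact mem_covers.1 hp
  · obtain rfl := mem_singleton.1 hk'
    rw [lamOfPair_right hij]
    exact mem_covers.1 hq

lemma sum_coverIndices_singleton (i : Fin n)
    (f : ((k : ({i} : Finset (Fin n))) → Sig k × Sig k) → M) :
    ∑ lam ∈ coverIndices Sig {i}, f lam = ∑ p ∈ covers (Sig i), f (lamOfSingle i p) := by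
  refine (sum_bij' (fun p _ => lamOfSingle i p) (fun lam _ => lam ⟨i, mem_singleton_self i⟩)
    (fun p hp => lamOfSingle_mem_coverIndices hp)
    (fun lam hlam => mem_covers.2 (mem_coverIndices.1 hlam _))
    (fun _ _ => rfl) (fun lam _ => ?_) fun _ _ => rfl).symm
  funext ⟨k, hk⟩
  obtain rfl := mem_singleton.1 hk
  rfl

lemma sum_coverIndices_pair {i j : Fin n} (hij : i ≠ j)
    (f : ((k : ({i, j} : Finset (Fin n))) → Sig k × Sig k) → M) :
    ∑ lam ∈ coverIndices Sig {i, j}, f lam =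
      ∑ p ∈ covers (Sig i), ∑ q ∈ covers (Sig j), f (lamOfPair i j p q) := by
  rw [← sum_product']
  refine (sum_bij' (fun pq _ => lamOfPair i j pq.1 pq.2)
    (fun lam _ => (lam ⟨i, mem_insert_self i {j}⟩,
      lam ⟨j, mem_insert_of_mem (mem_singleton_self j)⟩))
    (fun pq hpq => lamOfPair_mem_coverIndices hij (mem_product.1 hpq).1 (mem_product.1 hpq).2)
    (fun lam hlam => ?_) (fun pq _ => ?_) (fun lam _ => ?_) fun _ _ => rfl).symm
  · have hcov := mem_coverIndices.1 hlam
    exact mem_product.2 ⟨mem_covers.2 (hcov _), mem_covers.2 (hcov _)⟩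
  · rw [lamOfPair_left, lamOfPair_right hij]
  · funext ⟨k, hk⟩
    obtain rfl | hk' := mem_insert.1 hk
    · exact lamOfPair_left ..
    · obtain rfl := mem_singleton.1 hk'
      exact lamOfPair_right hij ..

lemma coverAltSum_eq_of_card_le_two
    {φ : ∀ I : Finset (Fin n), ((i : I) → Sig i × Sig i) → M}
    (hφ : ∀ I, 2 < #I → ∀ lam ∈ coverIndices Sig I, φ I lam = 0) :
    coverAltSum φ =
      ∑ i, ∑ j with i < j, ∑ p ∈ covers (Sig i), ∑ q ∈ covers (Sig j),
          φ {i, j} (lamOfPair i j p q) -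
        ∑ i, ∑ p ∈ covers (Sig i), φ {i} (lamOfSingle i p) := by
  rw [coverAltSum, sum_nonempty_eq_of_card_le_two fun I hI => by
    rw [sum_eq_zero (hφ I hI), smul_zero], add_comm, sub_eq_add_neg, ← sum_neg_distrib]
  congr 1
  · refine sum_congr rfl fun i _ => sum_congr rfl fun j hj => ?_
    have hij : i ≠ j := ((mem_filter_univ j).1 hj).ne
    rw [card_pair hij, neg_one_sq, one_smul, sum_coverIndices_pair hij]
  · refine sum_congr rfl fun i _ => ?_
    rw [card_singleton, pow_one, neg_one_smul, sum_coverIndices_singleton]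

end AddCommGroup

variable {A : Type*} [CommRing A]

lemma cSigma_eq_add_coverAltSum (c : A)
    (g : ∀ I : Finset (Fin n), ((i : I) → Sig i × Sig i) → A) (σ : ∀ i, Sig i) :
    cSigma c g σ =
      c + coverAltSum fun I lam => if ∀ i : I, σ i ≤ (lam i).1 then g I lam else 0 := by
  rw [cSigma, coverAltSum]
  congr 1
  refine sum_congr rfl fun I _ => ?_
  rw [coverIndices, ← sum_filter, filter_filter, zsmul_eq_mul]
  push_cast
  simp only [forall_and]

lemma cSigma_eq_of_isBot (c : A) (g : ∀ I : Finset (Fin n), ((i : I) → Sig i × Sig i) → A)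
    {η : ∀ i, Sig i} (hη : ∀ i, IsBot (η i)) : cSigma c g η = c + coverAltSum g := by
  simp only [cSigma_eq_add_coverAltSum, hη _ _, implies_true, if_true]

lemma sum_cSigma_mul (c : A) (g : ∀ I : Finset (Fin n), ((i : I) → Sig i × Sig i) → A)
    (w : (∀ i, Sig i) → A) :
    ∑ σ, cSigma c g σ * w σ =
      c * ∑ σ, w σ +
        coverAltSum fun I lam => g I lam * ∑ σ with ∀ i : I, σ i ≤ (lam i).1, w σ := by
  simp only [cSigma_eq_add_coverAltSum, add_mul, sum_add_distrib, coverAltSum_mul,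
    sum_coverAltSum, mul_sum, sum_filter, ite_mul, zero_mul, mul_ite, mul_zero]

end CoverSums

section ExactFormula

/-- The functions `αm` and `αp` extend the weight function `α` on the covers of the linear order
`S`, with least element `η` and greatest element `τ`, to its elements: they give the weights of
the covers just below and just above an element, with `αm η = -1` and `αp τ = 0`. -/
structure IsWeightExtension {S : Type*} [LinearOrder S] (η τ : S) (α : S × S → ℝ)
    (αm αp : S → ℝ) : Prop where
  isBot : IsBot η
  isTop : IsTop τ
  apply_bot : αm η = -1
  apply_top : αp τ = 0
  lower_eq : ∀ s t, s ⋖ t → αm t = α (s, t)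
  upper_eq : ∀ s t, s ⋖ t → αp s = α (s, t)

namespace IsWeightExtension

variable {S : Type*} [Fintype S] [LinearOrder S] {η τ : S} {α : S × S → ℝ} {αm αp : S → ℝ}

lemma sum_Jf_filter_le (h : IsWeightExtension η τ α αm αp) {x : A} (hx : IsNilpotent x) (m : S) :
    ∑ s with s ≤ m, Jf (αm s) (αp s) x = nexp x * Jf 0 (1 + αp m) x := by
  have htel := sum_filter_le_sub_of_covBy (u := fun s => Jf 0 (αm s) x)
    (v := fun s => Jf 0 (αp s) x) (fun s t hst => by rw [h.upper_eq s t hst, h.lower_eq s t hst])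
    h.isBot m
  simp only [← Jf_eq_sub] at htel
  rw [htel, h.apply_bot, Jf_neg_one_eq_nexp_mul _ hx]

lemma sum_Jf (h : IsWeightExtension η τ α αm αp) {x : A} (hx : IsNilpotent x) :
    ∑ s, Jf (αm s) (αp s) x = nexp x * Jf 0 1 x := by
  have htop := h.sum_Jf_filter_le hx τ
  rwa [filter_true_of_mem fun s _ => h.isTop s, h.apply_top, add_zero] at htop

end IsWeightExtension

variable {D : Fin n → A} {η τ : ∀ i, Sig i} {α : ∀ i, Sig i × Sig i → ℝ} {αm αp : ∀ i, Sig i → ℝ}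

lemma prod_Jf_mul_sum_prod_Jf (hD : ∀ i, IsNilpotent (D i))
    (hα : ∀ i, IsWeightExtension (η i) (τ i) (α i) (αm i) (αp i)) (I : Finset (Fin n))
    (m : ∀ i : I, Sig i) :
    (∏ i : I, Jf 0 1 (D i)) *
        ∑ σ : ∀ i, Sig i with ∀ i : I, σ i ≤ m i, ∏ i, Jf (αm i (σ i)) (αp i (σ i)) (D i) =
      (∏ i, Jf 0 1 (D i)) * (nexp (∑ i, D i) * ∏ i : I, Jf 0 (1 + αp i (m i)) (D i)) := by
  rw [sum_filter_forall_prod (fun i s => Jf (αm i s) (αp i s) (D i)) I fun i s => s ≤ m i]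
  simp only [(hα _).sum_Jf_filter_le (hD _), (hα _).sum_Jf (hD _), prod_mul_distrib]
  rw [nexp_sum univ fun i _ => hD i, ← prod_mul_prod_compl I fun i => nexp (D i),
    ← prod_mul_prod_compl I fun i => Jf 0 1 (D i), prod_coe_sort I fun i => nexp (D i),
    prod_coe_sort I fun i => Jf 0 1 (D i)]
  ring

/-- The contribution of the multi-index of covers `lam` on `I` to `chPar - c`, where `h` stands for
the class `h_{I,λ}`. -/
def correctionTerm (D : Fin n → A) (α : ∀ i, Sig i × Sig i → ℝ)
    (I : Finset (Fin n)) (lam : (i : I) → Sig i × Sig i) (h : A) : A :=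
  h * (nexp (∑ i, D i) * (∏ i : I, Jf 0 (1 + α i (lam i)) (D i) - ∏ i : I, Jf 0 1 (D i)))

variable {c : A} {g hh : ∀ I : Finset (Fin n), ((i : I) → Sig i × Sig i) → A}

lemma chPar_eq_nexp_mul (hD : ∀ i, IsNilpotent (D i))
    (hα : ∀ i, IsWeightExtension (η i) (τ i) (α i) (αm i) (αp i))
    (hGRR : ∀ I, I.Nonempty → ∀ lam ∈ coverIndices Sig I,
      g I lam = (∏ i : I, Jf 0 1 (D i)) * hh I lam) :
    chPar D αm αp c g =
      nexp (∑ i, D i) *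
        (c + coverAltSum fun I lam => hh I lam * ∏ i : I, Jf 0 (1 + α i (lam i)) (D i)) := by
  have hunit : IsUnit (∏ i, Jf 0 1 (D i)) :=
    IsUnit.prod_univ_iff.2 fun i => isUnit_Jf zero_ne_one (hD i)
  have htotal := prod_Jf_mul_sum_prod_Jf hD hα ∅ fun i => η i
  have hterm : ∀ I, I.Nonempty → ∀ lam ∈ coverIndices Sig I,
      g I lam * ∑ σ : ∀ i, Sig i with ∀ i : I, σ i ≤ (lam i).1,
          ∏ i, Jf (αm i (σ i)) (αp i (σ i)) (D i) =
        (∏ i, Jf 0 1 (D i)) * (nexp (∑ i, D i) *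
          (hh I lam * ∏ i : I, Jf 0 (1 + α i (lam i)) (D i))) := by
    intro I hI lam hlam
    have hcov := mem_coverIndices.1 hlam
    rw [hGRR I hI lam hlam, mul_right_comm, prod_Jf_mul_sum_prod_Jf hD hα]
    simp only [(hα _).upper_eq _ _ (hcov _)]
    ring
  simp only [univ_eq_empty, prod_empty, one_mul, mul_one, IsEmpty.forall_iff, filter_true] at htotal
  rw [chPar, sum_cSigma_mul, coverAltSum_congr hterm, htotal, ← mul_coverAltSum, ← mul_coverAltSum,
    mul_left_comm, ← mul_add, Ring.inverse_mul_cancel_left _ _ hunit, mul_comm c, ← mul_add]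

lemma eq_nexp_mul_of_twist (hη : ∀ i, IsBot (η i))
    (hGRR : ∀ I, I.Nonempty → ∀ lam ∈ coverIndices Sig I,
      g I lam = (∏ i : I, Jf 0 1 (D i)) * hh I lam)
    (htwist : cSigma c g η * nexp (∑ i, D i) = c) :
    c = nexp (∑ i, D i) * (c + coverAltSum fun I lam => hh I lam * ∏ i : I, Jf 0 1 (D i)) := by
  rw [cSigma_eq_of_isBot c g hη, mul_comm] at htwist
  simpa only [coverAltSum_congr fun I hI lam hlam => (hGRR I hI lam hlam).trans (mul_comm _ _)]
    using htwist.symm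

lemma chPar_eq_add_coverAltSum (hD : ∀ i, IsNilpotent (D i))
    (hα : ∀ i, IsWeightExtension (η i) (τ i) (α i) (αm i) (αp i))
    (hGRR : ∀ I, I.Nonempty → ∀ lam ∈ coverIndices Sig I,
      g I lam = (∏ i : I, Jf 0 1 (D i)) * hh I lam)
    (htwist : cSigma c g η * nexp (∑ i, D i) = c) :
    chPar D αm αp c g = c + coverAltSum fun I lam => correctionTerm D α I lam (hh I lam) := by
  have hc := eq_nexp_mul_of_twist (fun i => (hα i).isBot) hGRR htwist
  rw [← sub_eq_iff_eq_add']
  nth_rw 2 [hc]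
  rw [chPar_eq_nexp_mul hD hα hGRR, ← mul_sub, add_sub_add_left_eq_sub, ← coverAltSum_sub,
    mul_coverAltSum]
  exact coverAltSum_congr fun I _ lam _ => by
    rw [correctionTerm, ← mul_sub, mul_left_comm]

end ExactFormula

section DegreeTwo

open GradedAlgebra

variable {A : Type*} [CommRing A] [Algebra ℝ A] {n : ℕ} {Sig : Fin n → Type*}
  (𝒜 : ℕ → Submodule ℝ A) [GradedAlgebra 𝒜] {D : Fin n → A}

lemma proj_correctionTerm_eq_zero_of_lt {p k : ℕ} {h : A} (hlow : ∀ m < p, proj 𝒜 m h = 0)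
    (hk : k < p) (α : ∀ i, Sig i × Sig i → ℝ) (I : Finset (Fin n))
    (lam : (i : I) → Sig i × Sig i) : proj 𝒜 k (correctionTerm D α I lam h) = 0 :=
  proj_mul_eq_zero_of_lt 𝒜 hlow hk _

lemma proj_two_correctionTerm_singleton (hD : ∀ i, IsNilpotent (D i)) (hD1 : ∀ i, D i ∈ 𝒜 1)
    (α : ∀ i, Sig i × Sig i → ℝ) {h : A} {ρ : ℝ} (i : Fin n)
    (h0 : proj 𝒜 0 h = 0) (h1 : proj 𝒜 1 h = ρ • D i) (p : Sig i × Sig i) :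
    proj 𝒜 2 (correctionTerm D α {i} (lamOfSingle i p) h) =
      α i p • proj 𝒜 2 h - (1 / 2 * α i p ^ 2 * ρ) • D i ^ 2 +
        (α i p * ρ) • (D i * (∑ j, D j - D i)) := by
  rw [correctionTerm, Fintype.prod_subsingleton _ ⟨i, mem_singleton_self i⟩,
    Fintype.prod_subsingleton _ ⟨i, mem_singleton_self i⟩]
  exact proj_two_mul_nexp_mul_Jf_sub 𝒜 (hD i) (hD1 i) (isNilpotent_sum fun j _ => hD j)
    (sum_mem fun j _ => hD1 j) h0 h1 (α i p)

lemma proj_two_correctionTerm_pair (hD : ∀ i, IsNilpotent (D i)) (hD1 : ∀ i, D i ∈ 𝒜 1)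
    (α : ∀ i, Sig i × Sig i → ℝ) {h : A} {i j : Fin n} (hij : i ≠ j)
    (h0 : proj 𝒜 0 h = 0) (h1 : proj 𝒜 1 h = 0) (p : Sig i × Sig i) (q : Sig j × Sig j) :
    proj 𝒜 2 (correctionTerm D α {i, j} (lamOfPair i j p q) h) =
      (α i p * α j q + α i p + α j q) • proj 𝒜 2 h := by
  have hprod (f : ({i, j} : Finset (Fin n)) → A) :
      ∏ k, f k = f ⟨i, mem_insert_self i {j}⟩ *
        f ⟨j, mem_insert_of_mem (mem_singleton_self j)⟩ :=
    Fintype.prod_eq_mul _ _ (by simpa using hij) fun ⟨k, hk⟩ hne => by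
      simp only [ne_eq, Subtype.mk.injEq] at hne
      simp [hne] at hk
  rw [correctionTerm, hprod, hprod, lamOfPair_left, lamOfPair_right hij]
  exact proj_two_mul_nexp_mul_Jf_mul_Jf_sub 𝒜 (hD i) (hD1 i) (hD j) (hD1 j)
    (isNilpotent_sum fun j _ => hD j) (sum_mem fun j _ => hD1 j) h0 h1 (α i p) (α j q)

variable [∀ i, Fintype (Sig i)] [∀ i, LinearOrder (Sig i)]

lemma sum_proj_two_correctionTerm_singleton (hD : ∀ i, IsNilpotent (D i)) (hD1 : ∀ i, D i ∈ 𝒜 1)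
    (α : ∀ i, Sig i × Sig i → ℝ) (i : Fin n)
    {h : Sig i × Sig i → A} {r : Sig i × Sig i → ℝ} (h0 : ∀ p ∈ covers (Sig i), proj 𝒜 0 (h p) = 0)
    (h1 : ∀ p ∈ covers (Sig i), proj 𝒜 1 (h p) = r p • D i) :
    ∑ p ∈ covers (Sig i), proj 𝒜 2 (correctionTerm D α {i} (lamOfSingle i p) (h p)) =
      ∑ p ∈ covers (Sig i), α i p • proj 𝒜 2 (h p) -
        ∑ p ∈ covers (Sig i), (1 / 2 * α i p ^ 2 * r p) • D i ^ 2 +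
        (∑ p ∈ covers (Sig i), α i p * r p) • (D i * (∑ j, D j - D i)) := by
  rw [sum_smul, ← sum_sub_distrib, ← sum_add_distrib]
  exact sum_congr rfl fun p hp =>
    proj_two_correctionTerm_singleton 𝒜 hD hD1 α i (h0 p hp) (h1 p hp) p

lemma sum_proj_two_correctionTerm_pair (hD : ∀ i, IsNilpotent (D i)) (hD1 : ∀ i, D i ∈ 𝒜 1)
    (α : ∀ i, Sig i × Sig i → ℝ) {i j : Fin n} (hij : i ≠ j)
    {h : Sig i × Sig i → Sig j × Sig j → A}
    (h0 : ∀ p ∈ covers (Sig i), ∀ q ∈ covers (Sig j), proj 𝒜 0 (h p q) = 0)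
    (h1 : ∀ p ∈ covers (Sig i), ∀ q ∈ covers (Sig j), proj 𝒜 1 (h p q) = 0)
    {P : Type*} [Fintype P] {d : P → A} (hd : D i * D j = ∑ x, d x)
    {r : Sig i × Sig i → ℝ} {r' : Sig j × Sig j → ℝ} {rp : Sig i × Sig i → Sig j × Sig j → P → ℝ}
    (h2 : ∀ p ∈ covers (Sig i), ∀ q ∈ covers (Sig j), proj 𝒜 2 (h p q) = ∑ x, rp p q x • d x)
    (hr : ∀ p ∈ covers (Sig i), ∀ x, ∑ q ∈ covers (Sig j), rp p q x = r p)
    (hr' : ∀ q ∈ covers (Sig j), ∀ x, ∑ p ∈ covers (Sig i), rp p q x = r' q) :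
    ∑ p ∈ covers (Sig i), ∑ q ∈ covers (Sig j),
        proj 𝒜 2 (correctionTerm D α {i, j} (lamOfPair i j p q) (h p q)) =
      ∑ p ∈ covers (Sig i), ∑ q ∈ covers (Sig j), ∑ x, (α i p * α j q * rp p q x) • d x +
        (∑ p ∈ covers (Sig i), α i p * r p + ∑ q ∈ covers (Sig j), α j q * r' q) •
          (D i * D j) := by
  rw [hd, ← sum_smul_sum_of_marginals hr hr']
  refine sum_congr rfl fun p hp => sum_congr rfl fun q hq => ?_
  rw [proj_two_correctionTerm_pair 𝒜 hD hD1 α hij (h0 p hp q hq) (h1 p hp q hq), h2 p hp q hq]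

end DegreeTwo

open GradedAlgebra in
theorem chPar_deg2_general {A : Type*} [CommRing A] [Algebra ℝ A] {n : ℕ}
    {Sig : Fin n → Type*} [∀ i, Fintype (Sig i)] [∀ i, LinearOrder (Sig i)]
    {D : Fin n → A} (hD : ∀ i, IsNilpotent (D i))
    {η τ : ∀ i, Sig i} {α : ∀ i, Sig i × Sig i → ℝ} {αm αp : ∀ i, Sig i → ℝ}
    (hα : ∀ i, IsWeightExtension (η i) (τ i) (α i) (αm i) (αp i))
    {c : A} {g hh : ∀ I : Finset (Fin n), ((i : I) → Sig i × Sig i) → A}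
    (hGRR : ∀ I, I.Nonempty → ∀ lam ∈ coverIndices Sig I,
      g I lam = (∏ i : I, Jf 0 1 (D i)) * hh I lam)
    (htwist : cSigma c g η * nexp (∑ i, D i) = c)
    (𝒜 : ℕ → Submodule ℝ A) [GradedAlgebra 𝒜] (hD1 : ∀ i, D i ∈ 𝒜 1)
    (hhlow : ∀ I, ∀ lam ∈ coverIndices Sig I, ∀ m < #I, proj 𝒜 m (hh I lam) = 0)
    {r : ∀ i, Sig i × Sig i → ℝ}
    (hr : ∀ i, ∀ p ∈ covers (Sig i), proj 𝒜 1 (hh {i} (lamOfSingle i p)) = r i p • D i)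
    {P : Fin n → Fin n → Type*} [∀ i j, Fintype (P i j)] {Dp : ∀ i j, P i j → A}
    (hDprod : ∀ i j, i < j → D i * D j = ∑ x, Dp i j x)
    {rp : ∀ i j, Sig i × Sig i → Sig j × Sig j → P i j → ℝ}
    (hrp : ∀ i j, i < j → ∀ p ∈ covers (Sig i), ∀ q ∈ covers (Sig j),
      proj 𝒜 2 (hh {i, j} (lamOfPair i j p q)) = ∑ x, rp i j p q x • Dp i j x)
    (hcompat₁ : ∀ i j, i < j → ∀ p ∈ covers (Sig i), ∀ x,
      ∑ q ∈ covers (Sig j), rp i j p q x = r i p)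
    (hcompat₂ : ∀ i j, i < j → ∀ q ∈ covers (Sig j), ∀ x,
      ∑ p ∈ covers (Sig i), rp i j p q x = r j q) :
    proj 𝒜 2 (chPar D αm αp c g) =
      proj 𝒜 2 c - ∑ i, ∑ p ∈ covers (Sig i), α i p • proj 𝒜 2 (hh {i} (lamOfSingle i p)) +
        ∑ i, ∑ p ∈ covers (Sig i), (1 / 2 * α i p ^ 2 * r i p) • D i ^ 2 +
        ∑ i, ∑ j with i < j, ∑ p ∈ covers (Sig i), ∑ q ∈ covers (Sig j), ∑ x,
          (α i p * α j q * rp i j p q x) • Dp i j x := by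
  have hsingle (i : Fin n) :=
    have hlow := fun p hp => hhlow {i} _ (lamOfSingle_mem_coverIndices (p := p) hp)
    sum_proj_two_correctionTerm_singleton 𝒜 hD hD1 α i
      (fun p hp => hlow p hp 0 (by simp)) (hr i)
  have hpair (i j : Fin n) (hij : i < j) :=
    have hlow (m : ℕ) (hm : m < 2) : ∀ p ∈ covers (Sig i), ∀ q ∈ covers (Sig j),
        proj 𝒜 m (hh {i, j} (lamOfPair i j p q)) = 0 := fun p hp q hq =>
      hhlow _ _ (lamOfPair_mem_coverIndices hij.ne hp hq) m (by rwa [card_pair hij.ne])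
    sum_proj_two_correctionTerm_pair 𝒜 hD hD1 α hij.ne (hlow 0 two_pos) (hlow 1 one_lt_two)
      (hDprod i j hij) (hrp i j hij) (hcompat₁ i j hij) (hcompat₂ i j hij)
  rw [chPar_eq_add_coverAltSum hD hα hGRR htwist, map_add, map_coverAltSum (proj 𝒜 2),
    coverAltSum_eq_of_card_le_two fun I hI lam hlam =>
      proj_correctionTerm_eq_zero_of_lt 𝒜 (hhlow I lam hlam) hI α I lam,
    sum_congr rfl fun i _ => hsingle i,
    sum_congr rfl fun i _ => sum_congr rfl fun j hj => hpair i j ((mem_filter_univ j).1 hj)]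
  simp only [sum_add_distrib, sum_sub_distrib, sum_smul_mul_sum_sub]
  abel

/-- Degree `2` part of the parabolic Chern character:
`ch_2^{Par}(E) = ch_2^{Vb}(E) - Σ_i Σ_λ α_i(λ) ξ_*(c_1(Gr^i_λ))
  + ½ Σ_i Σ_λ α_i(λ)² rank(Gr^i_λ) [D_i]²
  + Σ_{i₁<i₂} Σ_{λ₁,λ₂} Σ_{p} α_{i₁}(λ₁) α_{i₂}(λ₂) rank_p(Gr^{i₁,i₂}_{λ₁,λ₂}) [D_p]`,
agreeing with Mochizuki's and Panov's formulas. -/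
theorem chPar_deg2
    {A : Type*} [CommRing A] [Algebra ℝ A]
    {n : ℕ} (hn : 1 ≤ n)
    {Sig : Fin n → Type*} [∀ i, Fintype (Sig i)] [∀ i, LinearOrder (Sig i)]
    [∀ i, Nontrivial (Sig i)]
    (D : Fin n → A) (hD : ∀ i, IsNilpotent (D i))
    (η τ : ∀ i, Sig i) (hη : ∀ i σ, η i ≤ σ) (hτ : ∀ i σ, σ ≤ τ i)
    (α : ∀ i, Sig i × Sig i → ℝ)
    (hα : ∀ i p, p.1 ⋖ p.2 → α i p ∈ Set.Ioc (-1 : ℝ) 0)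
    (hαmono : ∀ i (p p' : Sig i × Sig i),
        p.1 ⋖ p.2 → p'.1 ⋖ p'.2 → p.1 ≤ p'.1 → α i p ≤ α i p')
    (αp αm : ∀ i, Sig i → ℝ)
    (hαpτ : ∀ i, αp i (τ i) = 0)
    (hαpc : ∀ i (σ σ' : Sig i), σ ⋖ σ' → αp i σ = α i (σ, σ'))
    (hαmη : ∀ i, αm i (η i) = -1)
    (hαmc : ∀ i (σ σ' : Sig i), σ ⋖ σ' → αm i σ' = α i (σ, σ'))
    (c : A)
    (g hh : ∀ I : Finset (Fin n), ((i : I) → Sig i.1 × Sig i.1) → A)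
    (hGRR : ∀ (I : Finset (Fin n)), I.Nonempty →
        ∀ lam : (i : I) → Sig i.1 × Sig i.1, (∀ i : I, (lam i).1 ⋖ (lam i).2) →
          g I lam = (∏ i : I, Jf 0 1 (D i.1)) * hh I lam)
    (htwist : cSigma c g (fun i => η i) * nexp (∑ i, D i) = c)
    (𝒜 : ℕ → Submodule ℝ A) [GradedAlgebra 𝒜]
    (hD1 : ∀ i, D i ∈ 𝒜 1)
    (hhlow : ∀ (I : Finset (Fin n)) (lam : (i : I) → Sig i.1 × Sig i.1),
        (∀ i : I, (lam i).1 ⋖ (lam i).2) → ∀ m, m < I.card →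
          (DirectSum.decompose 𝒜 (hh I lam) m : A) = 0)
    (r : ∀ i, Sig i × Sig i → ℚ)
    (hr0 : ∀ i (p : Sig i × Sig i), p.1 ⋖ p.2 → 0 ≤ r i p)
    (hr1 : ∀ i (p : Sig i × Sig i), p.1 ⋖ p.2 →
        (DirectSum.decompose 𝒜 (hh {i} (lamOfSingle i p)) 1 : A) = (r i p : ℝ) • D i)
    (P : Fin n → Fin n → Type) [∀ i j, Fintype (P i j)]
    (Dp : ∀ i₁ i₂, P i₁ i₂ → A)
    (hDp2 : ∀ i₁ i₂, i₁ < i₂ → ∀ p, Dp i₁ i₂ p ∈ 𝒜 2)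
    (hDprod : ∀ i₁ i₂, i₁ < i₂ → D i₁ * D i₂ = ∑ p : P i₁ i₂, Dp i₁ i₂ p)
    (rp : ∀ i₁ i₂, (Sig i₁ × Sig i₁) → (Sig i₂ × Sig i₂) → P i₁ i₂ → ℚ)
    (hrp0 : ∀ i₁ i₂, i₁ < i₂ → ∀ (p₁ : Sig i₁ × Sig i₁) (p₂ : Sig i₂ × Sig i₂)
        (p : P i₁ i₂), p₁.1 ⋖ p₁.2 → p₂.1 ⋖ p₂.2 → 0 ≤ rp i₁ i₂ p₁ p₂ p)
    (hrp2 : ∀ i₁ i₂, i₁ < i₂ → ∀ (p₁ : Sig i₁ × Sig i₁) (p₂ : Sig i₂ × Sig i₂),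
        p₁.1 ⋖ p₁.2 → p₂.1 ⋖ p₂.2 →
          (DirectSum.decompose 𝒜 (hh {i₁, i₂} (lamOfPair i₁ i₂ p₁ p₂)) 2 : A) =
            ∑ p : P i₁ i₂, (rp i₁ i₂ p₁ p₂ p : ℝ) • Dp i₁ i₂ p)
    (hcompat₁ : ∀ i₁ i₂, i₁ < i₂ → ∀ (p : P i₁ i₂) (p₁ : Sig i₁ × Sig i₁), p₁.1 ⋖ p₁.2 →
        ∑ p₂ ∈ Finset.univ.filter (fun p₂ : Sig i₂ × Sig i₂ => p₂.1 ⋖ p₂.2),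
          rp i₁ i₂ p₁ p₂ p = r i₁ p₁)
    (hcompat₂ : ∀ i₁ i₂, i₁ < i₂ → ∀ (p : P i₁ i₂) (p₂ : Sig i₂ × Sig i₂), p₂.1 ⋖ p₂.2 →
        ∑ p₁ ∈ Finset.univ.filter (fun p₁ : Sig i₁ × Sig i₁ => p₁.1 ⋖ p₁.2),
          rp i₁ i₂ p₁ p₂ p = r i₂ p₂) :
    (DirectSum.decompose 𝒜 (chPar D αm αp c g) 2 : A) =
      (DirectSum.decompose 𝒜 c 2 : A) -
        (∑ i, ∑ p ∈ Finset.univ.filter (fun p : Sig i × Sig i => p.1 ⋖ p.2),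
          α i p • (DirectSum.decompose 𝒜 (hh {i} (lamOfSingle i p)) 2 : A)) +
        (∑ i, ∑ p ∈ Finset.univ.filter (fun p : Sig i × Sig i => p.1 ⋖ p.2),
          ((1 : ℝ) / 2 * α i p ^ 2 * (r i p : ℝ)) • (D i ^ 2)) +
        ∑ i₁, ∑ i₂ ∈ Finset.univ.filter (fun i₂ => i₁ < i₂),
          ∑ p₁ ∈ Finset.univ.filter (fun p₁ : Sig i₁ × Sig i₁ => p₁.1 ⋖ p₁.2),
            ∑ p₂ ∈ Finset.univ.filter (fun p₂ : Sig i₂ × Sig i₂ => p₂.1 ⋖ p₂.2),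
              ∑ p : P i₁ i₂,
                (α i₁ p₁ * α i₂ p₂ * (rp i₁ i₂ p₁ p₂ p : ℝ)) • Dp i₁ i₂ p := by
  exact chPar_deg2_general hD
    (fun i => ⟨hη i, hτ i, hαmη i, hαpτ i, hαmc i, hαpc i⟩)
    (fun I hI lam hlam => hGRR I hI lam (mem_coverIndices.1 hlam)) htwist 𝒜 hD1
    (fun I lam hlam => hhlow I lam (mem_coverIndices.1 hlam))
    (r := fun i p => r i p) (fun i p hp => hr1 i p (mem_covers.1 hp)) hDprod
    (rp := fun i j p q x => rp i j p q x)
    (fun i j hij p hp q hq => hrp2 i j hij p q (mem_covers.1 hp) (mem_covers.1 hq))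
    (fun i j hij p hp x => mod_cast hcompat₁ i j hij x p (mem_covers.1 hp))
    (fun i j hij q hq x => mod_cast hcompat₂ i j hij x q (mem_covers.1 hq))
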